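/- Let k be a field of characteristic p > 0. Then every finite Galois field extension E of k((x))((t)) whose degree is not divisible by p is induced by a finite separable field extension of k((t))(x): there exists a finite separable field extension E' of the rational function field k((t))(x) such that E' ⊗_{k((t))(x)} k((x))((t)) is isomorphic to E as a k((x))((t))-algebra. -/

import Mathlib

open scoped TensorProduct

attribute [local instance] Algebra.TensorProduct.rightAlgebra

/-- The ring homomorphism `k₁((t)) →+* k₂((t))` applying a ring homomorphism
`f : k₁ →+* k₂` to each coefficient of a Laurent series. -/
noncomputable def lsMap {R S : Type*} [CommRing R] [CommRing S]
    (f : R →+* S) : LaurentSeries R →+* LaurentSeries S where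
  toFun x := x.map f
  map_one' := by ext g; by_cases h : g = 0 <;> simp [h]
  map_mul' x y := HahnSeries.map_mul f.toNonUnitalRingHom
  map_zero' := by ext g; simp
  map_add' x y := HahnSeries.map_add f.toAddMonoidHom

/-- A type synonym for the Laurent series field `k((x))`, so that `k((x))((t))` is
`LaurentSeries (Kx k)`. -/
def Kx (k : Type) [Field k] : Type := LaurentSeries k

noncomputable instance (k : Type) [Field k] : Field (Kx k) :=
  inferInstanceAs (Field (LaurentSeries k))

/-! A finite extension `E` of a complete discretely valued field `K` with uniformizer `t` and
coefficient field `κ`, of degree prime to the characteristic, is very explicit: the residue field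
of `E` is separable over `κ` and hence lifts to a subfield `L` of `E`, and by Hensel's lemma the
units congruent to `1` have `e`-th roots, where `e` is the ramification index, so `E` is obtained
from `K` by adjoining `L` and a root `π` of `π ^ e = w * t` with `w ∈ L`.

Over `k((x))((t))` the field `L` is itself such an extension of `k((x))`, given by a finite
extension `N` of `k` and a root `y` of `y ^ f = w' * x` with `w' ∈ N`. Writing
`w = c * y ^ m * r ^ e` with `c ∈ N` and replacing `π` by `π / r`, the generators satisfy equations
over `k(x, t)`. They generate over any field `F` between `k(x, t)` and `k((x))((t))` an extension of
degree at most `[N : k] * f * e = [E : k((x))((t))]`, so its base change maps isomorphically to `E`.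
-/

universe u v

section AdicComplete

theorem isAdicComplete_of_finite {R : Type u} [CommRing R] [IsNoetherianRing R] (I : Ideal R)
    [IsAdicComplete I R] (M : Type u) [AddCommGroup M] [Module R M] [Module.Finite R M] :
    IsAdicComplete I M := by
  let e : M ≃ₗ[R] TensorProduct R (AdicCompletion I R) M :=
    (TensorProduct.lid R M).symm ≪≫ₗ
      TensorProduct.congr (AdicCompletion.ofLinearEquiv I R) (LinearEquiv.refl R M)
  have hfac : (AdicCompletion.of I M : M → AdicCompletion I M) =
      AdicCompletion.ofTensorProduct I M ∘ e := by
    ext x n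
    simp only [e, Function.comp_apply, LinearEquiv.trans_apply, TensorProduct.lid_symm_apply,
      TensorProduct.congr_tmul, LinearEquiv.refl_apply, AdicCompletion.ofTensorProduct_tmul]
    exact (one_smul (R ⧸ (I ^ n • ⊤ : Ideal R)) _).symm
  rw [← AdicCompletion.of_bijective_iff, hfac]
  exact (AdicCompletion.ofTensorProduct_bijective_of_finite_of_isNoetherian I M).comp e.bijective

theorem isAdicComplete_of_pow {R : Type*} [CommRing R] {I : Ideal R} {n : ℕ} (hn : n ≠ 0)
    [h : IsAdicComplete (I ^ n) R] : IsAdicComplete I R := by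
  let : WithIdeal R := ⟨I⟩
  have hI : IsAdic I := rfl
  exact hI.isAdicComplete_iff.mpr
    ((is_ideal_adic_pow hI (Nat.pos_of_ne_zero hn)).isAdicComplete_iff.mp h)

end AdicComplete

section LocalRing

open Polynomial

theorem exists_isIdempotentElem_sub_mem {B : Type*} [CommRing B] (J : Ideal B)
    [HenselianRing B J] {a : B} (ha : IsIdempotentElem (Ideal.Quotient.mk J a)) :
    ∃ b : B, IsIdempotentElem b ∧ b - a ∈ J := by
  have hroot : (X ^ 2 - X : B[X]).eval a ∈ J := by
    rw [← Ideal.Quotient.eq_zero_iff_mem]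
    simpa [sq, sub_eq_zero] using ha.eq
  have hsimple : IsUnit (Ideal.Quotient.mk J ((X ^ 2 - X : B[X]).derivative.eval a)) := by
    refine .of_mul_eq_one (Ideal.Quotient.mk J (2 * a - 1)) ?_
    simp only [derivative_X_sq, derivative_X, eval_sub, eval_mul, eval_C, eval_X,
      eval_one, map_sub, map_mul, map_one, map_ofNat (Ideal.Quotient.mk J)]
    linear_combination 4 * ha.eq
  obtain ⟨b, hb, hba⟩ := HenselianRing.is_henselian (X ^ 2 - X) (by monicity!) a hroot hsimple
  exact ⟨b, by simpa [IsIdempotentElem, sq, sub_eq_zero] using hb, hba⟩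

theorem isLocalRing_of_forall_isIdempotentElem {A : Type*} [CommRing A] [IsArtinianRing A]
    [Nontrivial A] (h : ∀ a : A, IsIdempotentElem a → a = 0 ∨ a = 1) : IsLocalRing A := by
  have hsub : Subsingleton (PrimeSpectrum A) := by
    refine ⟨fun p q ↦ by_contra fun hpq ↦ ?_⟩
    let s : TopologicalSpace.Clopens (PrimeSpectrum A) := ⟨{p}, isClopen_discrete _⟩
    obtain ⟨a, ha⟩ := PrimeSpectrum.isIdempotentElemEquivClopens.surjective s
    have hsa : ({p} : Set (PrimeSpectrum A)) = PrimeSpectrum.basicOpen a.1 := by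
      rw [← PrimeSpectrum.coe_isIdempotentElemEquivClopens_apply, ha]; rfl
    rcases h a.1 a.2 with h0 | h1
    · simpa [h0] using hsa.subset rfl
    · have hq : q ∈ ({p} : Set (PrimeSpectrum A)) := by simp [hsa, h1]
      exact hpq hq.symm
  have := (MaximalSpectrum.toPrimeSpectrum_injective (R := A)).subsingleton
  exact IsLocalRing.of_singleton_maximalSpectrum

theorem isLocalRing_of_finite (R : Type*) {B : Type*} [CommRing R] [IsLocalRing R] [CommRing B]
    [IsDomain B] [Algebra R B] [Module.Finite R B]
    [hB : HenselianRing B ((IsLocalRing.maximalIdeal R).map (algebraMap R B))] :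
    IsLocalRing B := by
  set m := IsLocalRing.maximalIdeal R
  set J := m.map (algebraMap R B)
  have : Module.Finite (R ⧸ m) (B ⧸ J) := Module.Finite.of_restrictScalars_finite R _ _
  let _ : Field (R ⧸ m) := Ideal.Quotient.field m
  have : IsArtinianRing (B ⧸ J) := IsArtinianRing.of_finite (R ⧸ m) (B ⧸ J)
  have : IsLocalHom (Ideal.Quotient.mk J) := isLocalHom_of_le_jacobson_bot J hB.jac
  have : Nontrivial (B ⧸ J) := Ideal.Quotient.nontrivial_iff.mpr fun hJ ↦
    bot_ne_top (Ideal.jacobson_eq_top_iff.mp (top_le_iff.mp (hJ ▸ hB.jac)))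
  have : IsLocalRing (B ⧸ J) := isLocalRing_of_forall_isIdempotentElem fun a ha ↦ by
    obtain ⟨a, rfl⟩ := Ideal.Quotient.mk_surjective a
    obtain ⟨b, hb, hba⟩ := exists_isIdempotentElem_sub_mem J ha
    rw [← (Ideal.Quotient.mk_eq_mk_iff_sub_mem b a).mpr hba]
    rcases IsIdempotentElem.iff_eq_zero_or_one.mp hb with rfl | rfl <;> simp
  exact RingHom.domain_isLocalRing (Ideal.Quotient.mk J)

theorem exists_pow_eq_of_sub_one_mem {B : Type*} [CommRing B] [Nontrivial B] (I : Ideal B)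
    [HenselianRing B I] {n : ℕ} (hn : IsUnit (n : B)) {b : B} (hb : b - 1 ∈ I) :
    ∃ r : B, r ^ n = b := by
  have hn0 : n ≠ 0 := by rintro rfl; simp at hn
  obtain ⟨r, hr, -⟩ := HenselianRing.is_henselian (I := I) (X ^ n - C b)
    (monic_X_pow_sub_C b hn0) 1 (by simpa using neg_mem hb)
    (by simpa [derivative_X_pow] using hn.map (Ideal.Quotient.mk I))
  exact ⟨r, by simpa [sub_eq_zero] using hr⟩

end LocalRing

section CoefficientField

open IsLocalRing

theorem exists_residueField_algHom_section (κ : Type*) {B : Type*} [Field κ] [CommRing B]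
    [IsLocalRing B] [Algebra κ B] [IsAdicComplete (maximalIdeal B) B]
    [Algebra.IsSeparable κ (ResidueField B)] :
    ∃ σ : ResidueField B →ₐ[κ] B, ∀ x, residue B (σ x) = x := by
  have := Algebra.FormallyEtale.of_isSeparable κ (ResidueField B)
  have : Algebra.FormallySmooth κ (ResidueField B) := inferInstance
  obtain ⟨σ, hσ⟩ := Algebra.FormallySmooth.exists_mkₐ_comp_eq_of_isAdicComplete
    (I := maximalIdeal B) (AlgHom.id κ (ResidueField B))
  exact ⟨σ, fun x ↦ DFunLike.congr_fun hσ x⟩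

theorem exists_eq_section_residue_mul_pow {B : Type*} [CommRing B] [IsLocalRing B]
    [HenselianRing B (maximalIdeal B)] {σ : ResidueField B →+* B}
    (hσ : ∀ x, residue B (σ x) = x) {n : ℕ} (hn : IsUnit (n : B)) {u : B} (hu : IsUnit u) :
    ∃ r : B, IsUnit r ∧ u = σ (residue B u) * r ^ n := by
  obtain ⟨v, hv⟩ : IsUnit (σ (residue B u)) := (hu.map (residue B)).map σ
  obtain ⟨r, hr⟩ := exists_pow_eq_of_sub_one_mem (maximalIdeal B) hn (b := ↑v⁻¹ * u) <| by
    rw [← residue_eq_zero_iff, map_sub, map_mul, map_one, sub_eq_zero, ← hσ (residue B u), ← hv,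
      ← map_mul, Units.inv_mul, map_one]
  have hn0 : n ≠ 0 := by rintro rfl; simp at hn
  refine ⟨r, (isUnit_pow_iff hn0).mp (hr ▸ v⁻¹.isUnit.mul hu), ?_⟩
  rw [hr, ← hv, Units.mul_inv_cancel_left]

variable {B : Type*} [CommRing B] [IsDomain B] [IsDiscreteValuationRing B]
  [HenselianRing B (maximalIdeal B)] {σ : ResidueField B →+* B}

theorem exists_irreducible_pow_eq_section_mul (hσ : ∀ x, residue B (σ x) = x) {e : ℕ}
    (he : IsUnit (e : B)) {t : B} (ht : Ideal.span {t} = maximalIdeal B ^ e) :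
    ∃ π : B, Irreducible π ∧ ∃ a, π ^ e = σ a * t := by
  obtain ⟨ϖ, hϖ⟩ := IsDiscreteValuationRing.exists_irreducible B
  obtain ⟨u, hu⟩ : Associated t (ϖ ^ e) := by
    rw [← Ideal.span_singleton_eq_span_singleton, ht, hϖ.maximalIdeal_eq,
      Ideal.span_singleton_pow]
  obtain ⟨-, ⟨r, rfl⟩, hur⟩ := exists_eq_section_residue_mul_pow hσ he u.isUnit
  refine ⟨ϖ * ↑r⁻¹, (irreducible_mul_units r⁻¹).mpr hϖ, residue B u, ?_⟩
  have hr : (r : B) ^ e * (↑r⁻¹ : B) ^ e = 1 := by rw [← mul_pow, Units.mul_inv, one_pow]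
  linear_combination (↑r⁻¹ : B) ^ e * (t * hur - hu) + σ (residue B u) * t * hr

theorem exists_eq_section_mul_zpow_mul_pow (hσ : ∀ x, residue B (σ x) = x) {π : B}
    (hπ : Irreducible π) {E : Type*} [Field E] [Algebra B E] [IsFractionRing B E] {n : ℕ}
    (hn : IsUnit (n : B)) {z : E} (hz : z ≠ 0) :
    ∃ (a : ResidueField B) (m : ℤ) (r : E), r ≠ 0 ∧
      z = algebraMap B E (σ a) * algebraMap B E π ^ m * r ^ n := by
  obtain ⟨m, u, rfl⟩ := IsDiscreteValuationRing.exists_units_eq_smul_zpow_of_irreducible hπ hz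
  obtain ⟨r, hr, hur⟩ := exists_eq_section_residue_mul_pow hσ hn u.isUnit
  refine ⟨residue B u, m, algebraMap B E r, (hr.map (algebraMap B E)).ne_zero, ?_⟩
  rw [Units.smul_def, Algebra.smul_def, mul_right_comm, ← map_pow, ← map_mul, ← hur]

end CoefficientField

theorem finiteDimensional_of_natCast_finrank_ne_zero {F V R : Type*} [DivisionRing F]
    [AddCommGroup V] [Module F V] [AddMonoidWithOne R] (h : (Module.finrank F V : R) ≠ 0) :
    FiniteDimensional F V :=
  Module.finite_of_finrank_pos <| Nat.pos_of_ne_zero fun h0 ↦ h (by rw [h0, Nat.cast_zero])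

theorem isSeparable_of_natCast_finrank_ne_zero {F E : Type*} [Field F] [Field E] [Algebra F E]
    (h : (Module.finrank F E : F) ≠ 0) : Algebra.IsSeparable F E := by
  have := finiteDimensional_of_natCast_finrank_ne_zero h
  refine ⟨fun x ↦ ?_⟩
  have hx : IsIntegral F x := Algebra.IsIntegral.isIntegral x
  have hdeg : ((minpoly F x).natDegree : F) ≠ 0 := by
    obtain ⟨d, hd⟩ := minpoly.degree_dvd hx
    rw [hd, Nat.cast_mul] at h
    exact left_ne_zero_of_mul h
  refine (Polynomial.separable_iff_derivative_ne_zero (minpoly.irreducible hx)).mpr fun h0 ↦ hdeg ?_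
  have hcoeff := Polynomial.coeff_derivative (minpoly F x) ((minpoly F x).natDegree - 1)
  rw [h0, Polynomial.coeff_zero, ← Nat.cast_add_one, Nat.sub_add_cancel (minpoly.natDegree_pos hx),
    Polynomial.coeff_natDegree, (minpoly.monic hx).leadingCoeff, one_mul] at hcoeff
  exact hcoeff.symm

section FiniteLocal

open IsLocalRing

theorem subalgebra_eq_top_of_pow_maximalIdeal_le {R B : Type*} [CommRing R] [IsLocalRing R]
    [CommRing B] [IsLocalRing B] [Algebra R B] [Module.Finite R B] {S : Subalgebra R B}
    (hres : ∀ x : ResidueField B, ∃ s ∈ S, residue B s = x)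
    {π : B} (hπS : π ∈ S) (hπ : maximalIdeal B = Ideal.span {π})
    {e : ℕ} (he : maximalIdeal B ^ e ≤ (maximalIdeal R).map (algebraMap R B)) : S = ⊤ := by
  have happrox (j : ℕ) (b : B) : ∃ s ∈ S, b - s ∈ maximalIdeal B ^ j := by
    induction j generalizing b with
    | zero => exact ⟨0, S.zero_mem, by simp⟩
    | succ j ih =>
      obtain ⟨s, hs, hbs⟩ := ih b
      rw [hπ, Ideal.span_singleton_pow, Ideal.mem_span_singleton] at hbs
      obtain ⟨c, hc⟩ := hbs
      obtain ⟨s', hs', hcs'⟩ := hres (residue B c)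
      refine ⟨s + π ^ j * s', S.add_mem hs (S.mul_mem (S.pow_mem hπS j) hs'), ?_⟩
      have hcs : c - s' ∈ maximalIdeal B := by
        rw [← residue_eq_zero_iff, map_sub, hcs', sub_self]
      rw [← sub_sub, hc, ← mul_sub, pow_succ]
      exact Ideal.mul_mem_mul (Ideal.pow_mem_pow (hπ ▸ Ideal.mem_span_singleton_self π) j) hcs
  refine Algebra.toSubmodule_eq_top.mp <| top_le_iff.mp <|
    Submodule.le_of_le_smul_of_le_jacobson_bot Module.Finite.fg_top
      (maximalIdeal_le_jacobson ⊥) fun b _ ↦ ?_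
  obtain ⟨s, hs, hbs⟩ := happrox e b
  rw [← add_sub_cancel s b, Ideal.smul_top_eq_map]
  exact Submodule.add_mem_sup hs (he hbs)

variable {R B : Type*} [CommRing R] [IsDomain R] [IsDiscreteValuationRing R] [CommRing B]
  [IsDomain B] [IsDiscreteValuationRing B] [Algebra R B] [Module.Finite R B] [FaithfulSMul R B]

theorem exists_map_maximalIdeal_eq_pow_and_finrank_mul_eq :
    ∃ e : ℕ, (maximalIdeal R).map (algebraMap R B) = maximalIdeal B ^ e ∧
      Module.finrank (ResidueField R) (ResidueField B) * e = Module.finrank R B := by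
  have hm : (maximalIdeal R).map (algebraMap R B) ≠ ⊥ := Ideal.map_ne_bot_of_ne_bot
    (IsDiscreteValuationRing.not_a_field R)
  obtain ⟨ϖ, hϖ⟩ := IsDiscreteValuationRing.exists_irreducible B
  obtain ⟨e, he⟩ := IsDiscreteValuationRing.ideal_eq_span_pow_irreducible hm hϖ
  rw [← Ideal.span_singleton_pow, ← hϖ.maximalIdeal_eq] at he
  have hover : (maximalIdeal R).primesOver B = {maximalIdeal B} :=
    IsLocalRing.primesOver_eq B (IsDiscreteValuationRing.not_a_field R)
  have : Subsingleton ((maximalIdeal R).primesOver B) := by rw [hover]; infer_instance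
  refine ⟨e, he, ?_⟩
  rw [← Ideal.sum_ramification_inertia_eq_finrank (maximalIdeal R) B,
    Fintype.sum_subsingleton _ ⟨maximalIdeal B, hover ▸ rfl⟩,
    Ideal.inertiaDeg_eq_of_isMaximal (maximalIdeal R) (maximalIdeal B),
    Ideal.IsDedekindDomain.ramificationIdx_eq_multiplicity (maximalIdeal R) (maximalIdeal B) hm, he,
    multiplicity_pow_self (IsDiscreteValuationRing.not_a_field B)
      (Ideal.isUnit_iff.not.mpr Ideal.IsPrime.ne_top'), mul_comm]
  rfl

theorem isAdicComplete_map_of_finite {R B : Type u} [CommRing R] [IsNoetherianRing R] [CommRing B]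
    [Algebra R B] [Module.Finite R B] (I : Ideal R) [IsAdicComplete I R] :
    IsAdicComplete (I.map (algebraMap R B)) B :=
  (IsAdicComplete.map_algebraMap_iff ..).mpr (isAdicComplete_of_finite I B)

theorem isDiscreteValuationRing_of_finite (R : Type u) {B : Type u} [CommRing R] [IsDomain R]
    [IsDiscreteValuationRing R] [IsAdicComplete (maximalIdeal R) R] [CommRing B]
    [IsDedekindDomain B] [Algebra R B] [Module.Finite R B] [FaithfulSMul R B] :
    IsDiscreteValuationRing B := by
  have := isAdicComplete_map_of_finite (B := B) (maximalIdeal R)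
  have := isLocalRing_of_finite R (B := B)
  have hB : ¬ IsField B := fun h ↦ IsDiscreteValuationRing.not_isField R
    (isField_of_isIntegral_of_isField (FaithfulSMul.algebraMap_injective R B) h)
  exact ((IsDiscreteValuationRing.TFAE B hB).out 0 2).mpr ‹IsDedekindDomain B›

theorem isAdicComplete_maximalIdeal_of_finite (R : Type u) {B : Type u} [CommRing R] [IsDomain R]
    [IsDiscreteValuationRing R] [IsAdicComplete (maximalIdeal R) R] [CommRing B] [IsDomain B]
    [IsDiscreteValuationRing B] [Algebra R B] [Module.Finite R B] [FaithfulSMul R B] :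
    IsAdicComplete (maximalIdeal B) B := by
  obtain ⟨e, he, hfin⟩ := exists_map_maximalIdeal_eq_pow_and_finrank_mul_eq (R := R) (B := B)
  have he0 : e ≠ 0 := by
    rintro rfl
    exact Module.finrank_pos.ne' hfin.symm
  have : IsAdicComplete (maximalIdeal B ^ e) B := he ▸ isAdicComplete_map_of_finite (maximalIdeal R)
  exact isAdicComplete_of_pow he0

end FiniteLocal

section TamePresentation

open IsLocalRing

/-- `IsTamePresentation t L π e` says that the extension `E / K`, for a field `K` which is
discretely valued with uniformizer `t` and coefficient field `κ`, is obtained from `K` by enlarging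
the coefficient field to `L` and then adjoining an `e`-th root `π` of a multiple `w * t`, `w ∈ L`.
The last field expresses that, for `n` prime to the characteristic, the units of `E` congruent to
`1` are `n`-th powers. -/
structure IsTamePresentation {κ K E : Type*} [Field κ] [Field K] [Field E] [Algebra κ E]
    [Algebra K E] (t : K) (L : IntermediateField κ E) (π : E) (e : ℕ) : Prop where
  finrank_mul : Module.finrank κ L * e = Module.finrank K E
  ne_zero : π ≠ 0
  pow_eq : ∃ w ∈ L, π ^ e = w * algebraMap K E t
  adjoin_eq_top : Algebra.adjoin K (insert π (L : Set E)) = ⊤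
  exists_eq_mul_zpow_mul_pow {n : ℕ} (hn : (n : κ) ≠ 0) {z : E} (hz : z ≠ 0) :
    ∃ c ∈ L, ∃ (m : ℤ) (r : E), r ≠ 0 ∧ z = c * π ^ m * r ^ n

theorem subalgebra_eq_top_of_forall_algebraMap_mem {B K E : Type*} [CommRing B] [Field K]
    [Field E] [Algebra B E] [IsFractionRing B E] [Algebra K E] [Algebra.IsAlgebraic K E]
    {S : Subalgebra K E} (hS : ∀ b : B, algebraMap B E b ∈ S) : S = ⊤ := by
  refine Algebra.eq_top_iff.mpr fun z ↦ ?_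
  obtain ⟨a, b, -, rfl⟩ := IsFractionRing.div_surjective (A := B) z
  exact div_eq_mul_inv (algebraMap B E a) _ ▸ S.mul_mem (hS a)
    (S.inv_mem_of_algebraic (x := ⟨_, hS b⟩) (Algebra.IsAlgebraic.isAlgebraic _))

theorem finrank_residueField_of_surjective {κ R B : Type*} [Field κ] [CommRing R] [IsLocalRing R]
    [CommRing B] [IsLocalRing B] [Algebra R B] [IsLocalHom (algebraMap R B)] [Algebra κ R]
    [Algebra κ B] [IsScalarTower κ R B]
    (hκ : Function.Surjective (algebraMap κ (ResidueField R))) :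
    Module.finrank κ (ResidueField B) = Module.finrank (ResidueField R) (ResidueField B) :=
  Algebra.finrank_eq_of_equiv_equiv
    (RingEquiv.ofBijective _ ⟨(algebraMap κ (ResidueField R)).injective, hκ⟩) (RingEquiv.refl _)
    (IsScalarTower.algebraMap_eq κ (ResidueField R) (ResidueField B)).symm

section Existence

variable {κ : Type v} {R K E : Type u} [Field κ] [CommRing R] [IsDomain R]
  [IsDiscreteValuationRing R] [Algebra κ R] [Field K] [Algebra R K] [IsFractionRing R K] [Field E]
  [Algebra K E] [FiniteDimensional K E] [Algebra R E] [IsScalarTower R K E] [Algebra κ E]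
  [IsScalarTower κ R E] {t : R}

theorem exists_isTamePresentation_of_isFractionRing (B : Type u) [CommRing B] [IsDomain B]
    [IsDiscreteValuationRing B] [IsAdicComplete (maximalIdeal B) B] [Algebra R B]
    [Module.Finite R B] [FaithfulSMul R B] [Algebra B E] [IsFractionRing B E]
    [IsScalarTower R B E] (hκ : Function.Surjective (algebraMap κ (ResidueField R)))
    (ht : maximalIdeal R = Ideal.span {t}) (hdeg : (Module.finrank K E : κ) ≠ 0) :
    ∃ (L : IntermediateField κ E) (π : E) (e : ℕ),
      IsTamePresentation (algebraMap R K t) L π e := by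
  let _ : Algebra κ B := ((algebraMap R B).comp (algebraMap κ R)).toAlgebra
  have : IsScalarTower κ R B := .of_algebraMap_eq fun _ ↦ rfl
  have : IsScalarTower κ B E := .of_algebraMap_eq fun c ↦ by
    rw [IsScalarTower.algebraMap_apply κ R E, IsScalarTower.algebraMap_apply R B E,
      ← IsScalarTower.algebraMap_apply κ R B]
  obtain ⟨e, he, hef⟩ := exists_map_maximalIdeal_eq_pow_and_finrank_mul_eq (R := R) (B := B)
  rw [← IsFractionRing.finrank_eq R K B E,
    ← finrank_residueField_of_surjective hκ] at hef
  have hdeg' : (Module.finrank κ (ResidueField B) : κ) ≠ 0 ∧ (e : κ) ≠ 0 := by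
    rwa [← mul_ne_zero_iff, ← Nat.cast_mul, hef]
  have := isSeparable_of_natCast_finrank_ne_zero hdeg'.1
  obtain ⟨σ, hσ⟩ := exists_residueField_algHom_section κ (B := B)
  have hunit {n : ℕ} (hn : (n : κ) ≠ 0) : IsUnit (n : B) := by
    simpa using (IsUnit.mk0 _ hn).map (algebraMap κ B)
  obtain ⟨π, hπ, a, hπe⟩ := exists_irreducible_pow_eq_section_mul (σ := σ.toRingHom) hσ
    (hunit hdeg'.2) (t := algebraMap R B t) <| by
      rw [← he, ht, Ideal.map_span, Set.image_singleton]
  let L := ((IsScalarTower.toAlgHom κ B E).comp σ).fieldRange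
  have hL (x : ResidueField B) : algebraMap B E (σ x) ∈ L := ⟨x, rfl⟩
  refine ⟨L, algebraMap B E π, e, ?_, ?_, ⟨_, hL a, ?_⟩, ?_, fun hn z hz ↦ ?_⟩
  · rw [← hef, (AlgEquiv.ofInjectiveField
      ((IsScalarTower.toAlgHom κ B E).comp σ)).toLinearEquiv.finrank_eq]
    rfl
  · exact (map_ne_zero_iff _ (FaithfulSMul.algebraMap_injective B E)).mpr hπ.ne_zero
  · rw [← map_pow, hπe, map_mul, ← IsScalarTower.algebraMap_apply R B E,
      IsScalarTower.algebraMap_apply R K E]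
    rfl
  · set S := Algebra.adjoin K (insert (algebraMap B E π) (L : Set E))
    suffices h : (S.restrictScalars R).comap (IsScalarTower.toAlgHom R B E) = ⊤ from
      subalgebra_eq_top_of_forall_algebraMap_mem fun b ↦ Algebra.eq_top_iff.mp h b
    refine subalgebra_eq_top_of_pow_maximalIdeal_le (fun x ↦ ⟨σ x, ?_, hσ x⟩) ?_ hπ.maximalIdeal_eq
      he.ge
    · exact Algebra.subset_adjoin (Set.mem_insert_of_mem _ (hL x))
    · exact Algebra.subset_adjoin (Set.mem_insert _ _)
  · obtain ⟨x, m, r, hr, rfl⟩ :=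
      exists_eq_section_mul_zpow_mul_pow (σ := σ.toRingHom) hσ hπ (hunit hn) hz
    exact ⟨_, hL x, m, r, hr, rfl⟩

theorem exists_isTamePresentation [IsAdicComplete (maximalIdeal R) R]
    (hκ : Function.Surjective (algebraMap κ (ResidueField R)))
    (ht : maximalIdeal R = Ideal.span {t}) (hdeg : (Module.finrank K E : κ) ≠ 0) :
    ∃ (L : IntermediateField κ E) (π : E) (e : ℕ),
      IsTamePresentation (algebraMap R K t) L π e := by
  have : Algebra.IsSeparable K E := isSeparable_of_natCast_finrank_ne_zero <| by
    simpa using (map_ne_zero_iff _ ((algebraMap R K).comp (algebraMap κ R)).injective).mpr hdeg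
  have : Module.Finite R (integralClosure R E) := IsIntegralClosure.finite R K E _
  have : IsDedekindDomain (integralClosure R E) := integralClosure.isDedekindDomain R K E
  have : IsFractionRing (integralClosure R E) E :=
    integralClosure.isFractionRing_of_finite_extension K E
  have : FaithfulSMul R E := .trans R K E
  have := isDiscreteValuationRing_of_finite R (B := integralClosure R E)
  have := isAdicComplete_maximalIdeal_of_finite R (B := integralClosure R E)
  exact exists_isTamePresentation_of_isFractionRing (integralClosure R E) hκ ht hdeg

end Existence

section LaurentSeries

open scoped LaurentSeries PowerSeries

theorem exists_isTamePresentation_laurentSeries {κ E : Type u} [Field κ] [Field E]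
    [Algebra κ⸨X⸩ E] [FiniteDimensional κ⸨X⸩ E] [Algebra κ E]
    (hE : ∀ c : κ, algebraMap κ E c = algebraMap κ⸨X⸩ E (HahnSeries.C c))
    (hdeg : (Module.finrank κ⸨X⸩ E : κ) ≠ 0) :
    ∃ (L : IntermediateField κ E) (π : E) (e : ℕ),
      IsTamePresentation (HahnSeries.single 1 1 : κ⸨X⸩) L π e := by
  let _ : Algebra κ⟦X⟧ E := ((algebraMap κ⸨X⸩ E).comp (algebraMap κ⟦X⟧ κ⸨X⸩)).toAlgebra
  have : IsScalarTower κ⟦X⟧ κ⸨X⸩ E := .of_algebraMap_eq fun _ ↦ rfl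
  have : IsScalarTower κ κ⟦X⟧ E := .of_algebraMap_eq fun c ↦
    (hE c).trans <| congrArg (algebraMap κ⸨X⸩ E) (HahnSeries.ofPowerSeries_C c).symm
  have hmax := PowerSeries.maximalIdeal_eq_span_X (k := κ)
  have : IsAdicComplete (maximalIdeal κ⟦X⟧) κ⟦X⟧ := hmax ▸ inferInstance
  have hκ : Function.Surjective (algebraMap κ (ResidueField κ⟦X⟧)) := fun y ↦ by
    obtain ⟨f, rfl⟩ := residue_surjective y
    refine ⟨f.constantCoeff, ?_⟩
    rw [IsScalarTower.algebraMap_apply κ κ⟦X⟧, ResidueField.algebraMap_eq, ← sub_eq_zero, ← map_sub,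
      residue_eq_zero_iff, hmax, Ideal.mem_span_singleton, PowerSeries.X_dvd_iff]
    simp
  simpa using exists_isTamePresentation (K := κ⸨X⸩) hκ hmax hdeg

end LaurentSeries

end TamePresentation

section Descent

variable {F E : Type*} [Field F] [Field E] [Algebra F E]

theorem exists_intermediateField_finrank_le {k : Type*} [Field k] [Algebra k F] [Algebra k E]
    [IsScalarTower k F E] (N : IntermediateField k E) [FiniteDimensional k N] :
    ∃ M : IntermediateField F E, (N : Set E) ⊆ M ∧ FiniteDimensional F M ∧
      Module.finrank F M ≤ Module.finrank k N := by
  have hrank := IntermediateField.adjoin_rank_le_of_isAlgebraic_right F N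
  have hN : Module.rank k N < Cardinal.aleph0 := Module.rank_lt_aleph0 k N
  have : FiniteDimensional F (IntermediateField.adjoin F (N : Set E)) :=
    Module.rank_lt_aleph0_iff.mp (hrank.trans_lt hN)
  refine ⟨_, IntermediateField.subset_adjoin F _, this, ?_⟩
  exact Cardinal.toNat_le_toNat hrank hN

theorem exists_intermediateField_finrank_le_mul_of_pow_mem (M : IntermediateField F E)
    [FiniteDimensional F M] {z : E} {e : ℕ} (he : e ≠ 0) (hz : z ^ e ∈ M) :
    ∃ M' : IntermediateField F E, M ≤ M' ∧ z ∈ M' ∧ FiniteDimensional F M' ∧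
      Module.finrank F M' ≤ Module.finrank F M * e := by
  let P : Polynomial M := .X ^ e - .C ⟨z ^ e, hz⟩
  have hP : P ≠ 0 := Polynomial.X_pow_sub_C_ne_zero (Nat.pos_of_ne_zero he) _
  have hPz : Polynomial.aeval z P = 0 := by simp [P, IntermediateField.algebraMap_apply]
  have hz : IsIntegral M z := IsAlgebraic.isIntegral ⟨P, hP, hPz⟩
  have := IntermediateField.adjoin.finiteDimensional hz
  have : Module.Free M (IntermediateField.adjoin M {z}) := .of_divisionRing _ _
  refine ⟨(IntermediateField.adjoin M {z}).restrictScalars F,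
    fun x hx ↦ (IntermediateField.adjoin M {z}).algebraMap_mem ⟨x, hx⟩,
    IntermediateField.mem_adjoin_simple_self M z,
    FiniteDimensional.trans F M (IntermediateField.adjoin M {z}), ?_⟩
  calc Module.finrank F (IntermediateField.adjoin M {z})
      = Module.finrank F M * (minpoly M z).natDegree := by
        rw [← IntermediateField.adjoin.finrank hz, Module.finrank_mul_finrank]
    _ ≤ Module.finrank F M * e := by
        gcongr
        simpa only [P, Polynomial.natDegree_X_pow_sub_C] using
          Polynomial.natDegree_le_of_dvd (minpoly.dvd M z hPz) hP

theorem exists_intermediateField_finrank_le_of_pow_eq {k : Type*} [Field k] [Algebra k F]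
    [Algebra k E] [IsScalarTower k F E] (N : IntermediateField k E) [FiniteDimensional k N]
    {y π w c : E} {x t : F} {f e : ℕ} {m : ℤ} (hf : f ≠ 0) (he : e ≠ 0) (hw : w ∈ N)
    (hy : y ^ f = w * algebraMap F E x) (hc : c ∈ N)
    (hπ : π ^ e = c * y ^ m * algebraMap F E t) :
    ∃ M : IntermediateField F E, insert π (insert y (N : Set E)) ⊆ M ∧ FiniteDimensional F M ∧
      Module.finrank F M ≤ Module.finrank k N * f * e := by
  obtain ⟨M₁, hNM₁, _, hM₁⟩ := exists_intermediateField_finrank_le (F := F) N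
  obtain ⟨M₂, hM₁₂, hyM₂, _, hM₂⟩ :=
    exists_intermediateField_finrank_le_mul_of_pow_mem M₁ hf (z := y) <|
      hy ▸ mul_mem (hNM₁ hw) (M₁.algebraMap_mem x)
  obtain ⟨M₃, hM₂₃, hπM₃, hfin, hM₃⟩ :=
    exists_intermediateField_finrank_le_mul_of_pow_mem M₂ he (z := π) <|
      hπ ▸ mul_mem (mul_mem (hM₁₂ (hNM₁ hc)) (zpow_mem hyM₂ m)) (M₂.algebraMap_mem t)
  refine ⟨M₃, ?_, hfin, hM₃.trans (Nat.mul_le_mul_right e (hM₂.trans (Nat.mul_le_mul_right f hM₁)))⟩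
  rw [Set.insert_subset_iff, Set.insert_subset_iff]
  exact ⟨hπM₃, hM₂₃ hyM₂, fun z hz ↦ hM₂₃ (hM₁₂ (hNM₁ hz))⟩

theorem finrank_eq_and_nonempty_tensorProduct_algEquiv {K : Type*} [Field K] [Algebra F K]
    [Algebra K E] [IsScalarTower F K E] [FiniteDimensional K E] (M : IntermediateField F E)
    [FiniteDimensional F M] (hM : Algebra.adjoin K (M : Set E) = ⊤)
    (hle : Module.finrank F M ≤ Module.finrank K E) :
    Module.finrank F M = Module.finrank K E ∧ Nonempty (M ⊗[F] K ≃ₐ[K] E) := by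
  let φ : K ⊗[F] M →ₐ[K] E := Algebra.TensorProduct.productLeftAlgHom (Algebra.ofId K E) M.val
  have hsurj : Function.Surjective φ := by
    rw [← AlgHom.range_eq_top, eq_top_iff, ← hM]
    exact Algebra.adjoin_le fun x hx ↦ ⟨1 ⊗ₜ ⟨x, hx⟩, by simp [φ]⟩
  have hfinrank : Module.finrank K (K ⊗[F] M) = Module.finrank K E :=
    le_antisymm (Module.finrank_baseChange.trans_le hle)
      (φ.toLinearMap.finrank_le_finrank_of_surjective hsurj)
  have hinj : Function.Injective φ :=
    (LinearMap.injective_iff_surjective_of_finrank_eq_finrank (f := φ.toLinearMap) hfinrank).mpr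
      hsurj
  exact ⟨Module.finrank_baseChange.symm.trans hfinrank,
    ⟨(Algebra.TensorProduct.commRight F K M).symm.trans (.ofBijective φ ⟨hinj, hsurj⟩)⟩⟩

end Descent

section TwoStep

variable {k κ K E : Type*} [Field k] [Field κ] [Field K] [Field E] [Algebra κ E] [Algebra K E]
  {L : IntermediateField κ E} [Algebra k L] {N : IntermediateField k L}
  {x : κ} {t : K} {y : L} {π : E} {f e : ℕ}

theorem IsTamePresentation.exists_pow_eq_mul_zpow_mul (hN : IsTamePresentation x N y f)
    (hL : IsTamePresentation t L π e) (hκ : (algebraMap κ E).range ≤ (algebraMap K E).range)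
    (he : (e : k) ≠ 0) :
    ∃ π' : E, (∃ c ∈ N, ∃ m : ℤ, π' ^ e = c * y ^ m * algebraMap K E t) ∧
      Algebra.adjoin K (insert π' (insert (y : E) ((↑) '' (N : Set L)))) = ⊤ := by
  have he0 : e ≠ 0 := by rintro rfl; simp at he
  obtain ⟨w, hw, hπe⟩ := hL.pow_eq
  have hw0 : (⟨w, hw⟩ : L) ≠ 0 := fun h ↦ hL.ne_zero <| by
    rw [← pow_eq_zero_iff he0, hπe, show w = 0 from congrArg Subtype.val h, zero_mul]
  obtain ⟨c, hc, m, r, hr, hwr⟩ := hN.exists_eq_mul_zpow_mul_pow he hw0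
  have hr' : (r : E) ≠ 0 := by simpa using hr
  replace hwr : w = c * (y : E) ^ m * (r : E) ^ e := (congrArg L.val hwr).trans <| by
    simp only [map_mul, map_pow, map_zpow₀, IntermediateField.coe_val]
  refine ⟨π / r, ⟨c, hc, m, ?_⟩, ?_⟩
  · rw [div_pow, hπe, hwr]
    field_simp
  set S := Algebra.adjoin K (insert (π / r) (insert (y : E) ((↑) '' (N : Set L))))
  have hLS (z : L) : (z : E) ∈ S := by
    have hz : z ∈ Algebra.adjoin κ (insert y (N : Set L)) := hN.adjoin_eq_top ▸ Algebra.mem_top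
    induction hz using Algebra.adjoin_induction with
    | mem z hz =>
      refine Algebra.subset_adjoin (Set.mem_insert_of_mem _ ?_)
      exact hz.imp (congrArg Subtype.val) (Set.mem_image_of_mem _)
    | algebraMap c =>
      obtain ⟨a, ha⟩ := hκ ⟨c, rfl⟩
      rw [← IntermediateField.algebraMap_apply, ← IsScalarTower.algebraMap_apply, ← ha]
      exact S.algebraMap_mem a
    | add z₁ z₂ _ _ h₁ h₂ => exact S.add_mem h₁ h₂
    | mul z₁ z₂ _ _ h₁ h₂ => exact S.mul_mem h₁ h₂
  have hπS : π ∈ S := by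
    rw [← div_mul_cancel₀ π hr']
    exact S.mul_mem (Algebra.subset_adjoin (Set.mem_insert _ _)) (hLS r)
  rw [eq_top_iff, ← hL.adjoin_eq_top, Algebra.adjoin_le_iff, Set.insert_subset_iff]
  exact ⟨hπS, fun z hz ↦ hLS ⟨z, hz⟩⟩

theorem IsTamePresentation.exists_intermediateField_tensorProduct_algEquiv {F : Type*} [Field F]
    [FiniteDimensional K E] [Algebra F K] [Algebra F E] [IsScalarTower F K E] [Algebra k F]
    [Algebra k E] [IsScalarTower k F E] [IsScalarTower k L E]
    (hN : IsTamePresentation x N y f) (hL : IsTamePresentation t L π e)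
    (hκ : (algebraMap κ E).range ≤ (algebraMap K E).range)
    (hx : algebraMap κ E x ∈ (algebraMap F E).range)
    (ht : algebraMap K E t ∈ (algebraMap F E).range) (hdeg : (Module.finrank K E : k) ≠ 0) :
    ∃ M : IntermediateField F E, FiniteDimensional F M ∧
      Module.finrank F M = Module.finrank K E ∧ Nonempty (M ⊗[F] K ≃ₐ[K] E) := by
  have hprod : Module.finrank k N * f * e = Module.finrank K E := by
    rw [← hL.finrank_mul, hN.finrank_mul]
  have hne : ((Module.finrank k N : k) ≠ 0 ∧ (f : k) ≠ 0) ∧ (e : k) ≠ 0 := by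
    rwa [← mul_ne_zero_iff, ← mul_ne_zero_iff, ← Nat.cast_mul, ← Nat.cast_mul, hprod]
  obtain ⟨⟨hN0, hf⟩, he⟩ := hne
  have hf0 : f ≠ 0 := by rintro rfl; simp at hf
  have he0 : e ≠ 0 := by rintro rfl; simp at he
  have := finiteDimensional_of_natCast_finrank_ne_zero hN0
  let φ := N.equivMap (IsScalarTower.toAlgHom k L E)
  have := φ.toLinearEquiv.finiteDimensional
  obtain ⟨x', hx'⟩ := hx
  obtain ⟨t', ht'⟩ := ht
  obtain ⟨w, hw, hyf⟩ := hN.pow_eq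
  obtain ⟨π', ⟨c, hc, m, hπ'⟩, htop⟩ := hN.exists_pow_eq_mul_zpow_mul hL hκ he
  have hy : (y : E) ^ f = w * algebraMap F E x' := hx' ▸ congrArg L.val hyf
  rw [← ht'] at hπ'
  obtain ⟨M, hM, hfin, hle⟩ := exists_intermediateField_finrank_le_of_pow_eq
    (N.map (IsScalarTower.toAlgHom k L E)) hf0 he0 ⟨w, hw, rfl⟩ hy ⟨c, hc, rfl⟩ hπ'
  refine ⟨M, hfin, finrank_eq_and_nonempty_tensorProduct_algEquiv M ?_ ?_⟩
  · exact top_le_iff.mp (htop.ge.trans (Algebra.adjoin_mono hM))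
  · rwa [← hprod, φ.toLinearEquiv.finrank_eq]

end TwoStep

section LaurentSeries

open scoped LaurentSeries

theorem branch_descent_tame_char_p_general {k : Type u} {F : Type*} [Field k] [Field F]
    [Algebra k F] [Algebra F k⸨X⸩⸨X⸩] {x t : F}
    (hk : ∀ c : k, algebraMap F k⸨X⸩⸨X⸩ (algebraMap k F c) = HahnSeries.C (HahnSeries.C c))
    (hx : algebraMap F k⸨X⸩⸨X⸩ x = HahnSeries.C (HahnSeries.single 1 1))
    (ht : algebraMap F k⸨X⸩⸨X⸩ t = HahnSeries.single 1 1)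
    (E : Type u) [Field E] [Algebra k⸨X⸩⸨X⸩ E] [FiniteDimensional k⸨X⸩⸨X⸩ E]
    (hdeg : (Module.finrank k⸨X⸩⸨X⸩ E : k) ≠ 0) :
    ∃ (E' : Type u) (_ : Field E') (_ : Algebra F E'), FiniteDimensional F E' ∧
      Algebra.IsSeparable F E' ∧ Nonempty (E' ⊗[F] k⸨X⸩⸨X⸩ ≃ₐ[k⸨X⸩⸨X⸩] E) := by
  let _ : Algebra k⸨X⸩ E := ((algebraMap k⸨X⸩⸨X⸩ E).comp HahnSeries.C).toAlgebra
  let _ : Algebra F E := ((algebraMap k⸨X⸩⸨X⸩ E).comp (algebraMap F k⸨X⸩⸨X⸩)).toAlgebra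
  let _ : Algebra k E := ((algebraMap F E).comp (algebraMap k F)).toAlgebra
  have : IsScalarTower F k⸨X⸩⸨X⸩ E := .of_algebraMap_eq fun _ ↦ rfl
  have : IsScalarTower k F E := .of_algebraMap_eq fun _ ↦ rfl
  obtain ⟨L, π, e, hL⟩ := exists_isTamePresentation_laurentSeries (κ := k⸨X⸩) (E := E)
    (fun _ ↦ rfl) (by simpa using (map_ne_zero_iff _ HahnSeries.C_injective).mpr hdeg)
  let _ : Algebra k L := ((algebraMap k⸨X⸩ L).comp HahnSeries.C).toAlgebra
  have : IsScalarTower k L E := .of_algebraMap_eq fun c ↦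
    congrArg (algebraMap k⸨X⸩⸨X⸩ E) (hk c)
  have hdegL : (Module.finrank k⸨X⸩ L : k) ≠ 0 := by
    rw [← hL.finrank_mul, Nat.cast_mul] at hdeg
    exact left_ne_zero_of_mul hdeg
  have := finiteDimensional_of_natCast_finrank_ne_zero hdegL
  obtain ⟨N, y, f, hN⟩ := exists_isTamePresentation_laurentSeries (κ := k) (E := L)
    (fun _ ↦ rfl) hdegL
  obtain ⟨M, hfin, hfinrank, hiso⟩ := hN.exists_intermediateField_tensorProduct_algEquiv (F := F) hL
    (by rintro _ ⟨c, rfl⟩; exact ⟨_, rfl⟩)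
    ⟨x, congrArg _ hx⟩ ⟨t, congrArg _ ht⟩ hdeg
  refine ⟨M, inferInstance, inferInstance, hfin, isSeparable_of_natCast_finrank_ne_zero ?_, hiso⟩
  simpa [hfinrank] using (map_ne_zero_iff _ (algebraMap k F).injective).mpr hdeg

end LaurentSeries

theorem lsMap_C {R S : Type*} [CommRing R] [CommRing S] (f : R →+* S) (r : R) :
    lsMap f (HahnSeries.C r) = HahnSeries.C (f r) :=
  HahnSeries.map_C r f

theorem lsMap_single {R S : Type*} [CommRing R] [CommRing S] (f : R →+* S) (n : ℤ) (r : R) :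
    lsMap f (HahnSeries.single n r) = HahnSeries.single n (f r) :=
  HahnSeries.map_single ((f : R →+ S) : ZeroHom R S)

/-- In equal characteristic `p > 0`, every finite Galois field extension of
`k((x))((t))` of degree prime to `p` is induced by a finite separable field extension of
`k((t))(x)`, where `k((t))(x)` embeds into `k((x))((t))` by sending `t` to `t` and `x`
to `x`. -/
theorem branch_descent_tame_char_p
    (p : ℕ) (hp : p.Prime) (k : Type) [Field k] [CharP k p]
    (ψ : RatFunc (LaurentSeries k) →+* LaurentSeries (Kx k))
    (hψC : ∀ a : LaurentSeries k,
      ψ (RatFunc.C a) = lsMap ((HahnSeries.C : k →+* Kx k)) a)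
    (hψX : ψ RatFunc.X = HahnSeries.C ((HahnSeries.single (1 : ℤ) (1 : k) : Kx k)))
    (E : Type) [Field E] [Algebra (LaurentSeries (Kx k)) E]
    [FiniteDimensional (LaurentSeries (Kx k)) E]
    [IsGalois (LaurentSeries (Kx k)) E]
    (hdeg : ¬ p ∣ Module.finrank (LaurentSeries (Kx k)) E) :
    letI : Algebra (RatFunc (LaurentSeries k)) (LaurentSeries (Kx k)) := ψ.toAlgebra
    ∃ (E' : Type) (_ : Field E') (_ : Algebra (RatFunc (LaurentSeries k)) E'),
      FiniteDimensional (RatFunc (LaurentSeries k)) E' ∧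
      Algebra.IsSeparable (RatFunc (LaurentSeries k)) E' ∧
      Nonempty ((E' ⊗[RatFunc (LaurentSeries k)] LaurentSeries (Kx k))
        ≃ₐ[LaurentSeries (Kx k)] E) := by
  -- Instance search does not unfold `Kx k` to `k((x))`, so instances are restated over the latter.
  let _ : Algebra (LaurentSeries (LaurentSeries k)) E := ‹Algebra (LaurentSeries (Kx k)) E›
  have : FiniteDimensional (LaurentSeries (LaurentSeries k)) E :=
    ‹FiniteDimensional (LaurentSeries (Kx k)) E›
  let _ : Algebra (RatFunc (LaurentSeries k)) (LaurentSeries (LaurentSeries k)) := ψ.toAlgebra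
  let _ : Algebra k (RatFunc (LaurentSeries k)) := (RatFunc.C.comp HahnSeries.C).toAlgebra
  exact branch_descent_tame_char_p_general (x := RatFunc.X)
    (t := RatFunc.C (HahnSeries.single 1 1)) (fun c ↦ (hψC _).trans (lsMap_C _ c)) hψX
    ((hψC _).trans ((lsMap_single _ 1 1).trans (congrArg _ (map_one HahnSeries.C)))) E
    ((CharP.cast_eq_zero_iff k p _).not.mpr hdeg)
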